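/- arXiv:0805.3986 — 4 statements merged into one kernel-verified Lean document; each statement's English description precedes it below -/
import Mathlib

section
/- Let R be a commutative ring, let n be a positive integer, and let u, v, w ∈ R. Then (u^n·w)^n·(u·v^n) + (u·v^n)^n·(v·w^n) + (v·w^n)^n·(u^n·w) = (u·v·w)^n·(u^(n²−n+1) + v^(n²−n+1) + w^(n²−n+1)). In particular, if u^(n²−n+1) + v^(n²−n+1) + w^(n²−n+1) = 0, then (x, y, z) = (u^n·w, u·v^n, v·w^n) satisfies x^n·y + y^n·z + z^n·x = 0. -/
theorem pow_mul_pow_sq_sub_add_one {M : Type*} [Monoid M] (a : M) (n : ℕ) :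
    a ^ n * a ^ (n ^ 2 - n + 1) = (a ^ n) ^ n * a := by
  have exponent_eq : n + (n ^ 2 - n + 1) = n * n + 1 := by
    rw [← add_assoc, Nat.add_sub_of_le (Nat.le_self_pow two_ne_zero n), sq]
  rw [← pow_add, exponent_eq, pow_succ, pow_mul]

theorem pow_mul_pow_mul_mul_pow_eq {M : Type*} [CommMonoid M] (n : ℕ) (u v w : M) :
    (u ^ n * w) ^ n * (u * v ^ n) = (u * v * w) ^ n * u ^ (n ^ 2 - n + 1) :=
  calc
    (u ^ n * w) ^ n * (u * v ^ n) = (u ^ n) ^ n * u * (v ^ n * w ^ n) := by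
      rw [mul_pow]
      ac_rfl
    _ = u ^ n * u ^ (n ^ 2 - n + 1) * (v ^ n * w ^ n) := by
      rw [pow_mul_pow_sq_sub_add_one]
    _ = (u * v * w) ^ n * u ^ (n ^ 2 - n + 1) := by
      rw [mul_pow, mul_pow]
      ac_rfl

theorem stmt_6_general (R : Type*) [CommSemiring R] (n : ℕ) (u v w : R) :
    (u ^ n * w) ^ n * (u * v ^ n) + (u * v ^ n) ^ n * (v * w ^ n)
        + (v * w ^ n) ^ n * (u ^ n * w)
      = (u * v * w) ^ n
        * (u ^ (n ^ 2 - n + 1) + v ^ (n ^ 2 - n + 1) + w ^ (n ^ 2 - n + 1)) ∧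
    (u ^ (n ^ 2 - n + 1) + v ^ (n ^ 2 - n + 1) + w ^ (n ^ 2 - n + 1) = 0 →
      (u ^ n * w) ^ n * (u * v ^ n) + (u * v ^ n) ^ n * (v * w ^ n)
        + (v * w ^ n) ^ n * (u ^ n * w) = 0) := by
  -- The last two monomials come from the first by the cyclic shift `u → v → w → u`.
  have u_term := pow_mul_pow_mul_mul_pow_eq n u v w
  have v_term : (u * v ^ n) ^ n * (v * w ^ n) = (u * v * w) ^ n * v ^ (n ^ 2 - n + 1) := by
    rw [mul_comm u (v ^ n), mul_rotate u v w, pow_mul_pow_mul_mul_pow_eq n v w u]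
  have w_term : (v * w ^ n) ^ n * (u ^ n * w) = (u * v * w) ^ n * w ^ (n ^ 2 - n + 1) := by
    rw [mul_comm v (w ^ n), mul_comm (u ^ n) w, ← mul_rotate w u v,
      pow_mul_pow_mul_mul_pow_eq n w u v]
  rw [u_term, v_term, w_term, ← mul_add, ← mul_add]
  exact ⟨rfl, fun fermat => by rw [fermat, mul_zero]⟩

/-- For `n ≥ 1` and `u, v, w` in a commutative ring,
`(uⁿw)ⁿ(uvⁿ) + (uvⁿ)ⁿ(vwⁿ) + (vwⁿ)ⁿ(uⁿw) = (uvw)ⁿ(u^(n²−n+1) + v^(n²−n+1) + w^(n²−n+1))`.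
In particular, if `u^(n²−n+1) + v^(n²−n+1) + w^(n²−n+1) = 0`, then
`(x,y,z) = (uⁿw, uvⁿ, vwⁿ)` satisfies `xⁿy + yⁿz + zⁿx = 0`. -/
theorem stmt_6 (R : Type*) [CommRing R] (n : ℕ) (hn : 0 < n) (u v w : R) :
    (u ^ n * w) ^ n * (u * v ^ n) + (u * v ^ n) ^ n * (v * w ^ n)
        + (v * w ^ n) ^ n * (u ^ n * w)
      = (u * v * w) ^ n
        * (u ^ (n ^ 2 - n + 1) + v ^ (n ^ 2 - n + 1) + w ^ (n ^ 2 - n + 1)) ∧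
    (u ^ (n ^ 2 - n + 1) + v ^ (n ^ 2 - n + 1) + w ^ (n ^ 2 - n + 1) = 0 →
      (u ^ n * w) ^ n * (u * v ^ n) + (u * v ^ n) ^ n * (v * w ^ n)
        + (v * w ^ n) ^ n * (u ^ n * w) = 0) := by
  exact stmt_6_general R n u v w
end

section
/- Let k be an algebraically closed field of characteristic p ≥ 3, let a, b be positive integers, let m = lcm(a, b), and suppose there exists a positive integer ν with p^ν ≡ −1 (mod m). Then the double cover X_{a,b} of the affine plane defined by z² = (x^a − 1)·(y^b − 1) is unirational; that is, there exists an injective k-algebra homomorphism from the fraction field of the integral domain k[x, y, z]/(z² − (x^a − 1)·(y^b − 1)) into the fraction field of the polynomial ring k[t₁, t₂] in two variables over k. -/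
open MvPolynomial

/-- The defining polynomial `z² − (xᵃ − 1)(yᵇ − 1)` of the double cover `X_{a,b}`. -/
noncomputable abbrev xabPoly (k : Type*) [CommRing k] (a b : ℕ) : MvPolynomial (Fin 3) k :=
  (X 2 : MvPolynomial (Fin 3) k) ^ 2 - (X 0 ^ a - 1) * (X 1 ^ b - 1)

/-- The coordinate ring `k[x, y, z]/(z² − (xᵃ − 1)(yᵇ − 1))` of `X_{a,b}`. -/
abbrev XabRing (k : Type*) [CommRing k] (a b : ℕ) : Type _ :=
  MvPolynomial (Fin 3) k ⧸ Ideal.span {xabPoly k a b}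

/-!
Let `q = p ^ ν`. The Cayley transform `x = (u + 1) / (u - 1)` satisfies
`x ^ (q + 1) - 1 = 2 (u ^ q + u) / (u - 1) ^ (q + 1)`. Since `q + 1` is even, the surface
`z² = (x ^ (q + 1) - 1) (y ^ (q + 1) - 1)`, which dominates `X_{a,b}` through powers of `x` and `y`,
acquires a point as soon as `(u ^ q + u) (r ^ q + r)` is a square. Impose
`u ^ q + u = (r ^ q + r) s ^ (q (q + 1))` and put `e = u - r s ^ (q + 1)`: the terms in `r ^ q`
cancel, leaving the equation `e ^ q + e = r (s ^ (q (q + 1)) - s ^ (q + 1))`, linear in `r`.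
Thus `r` and `u` are rational functions of the free parameters `e` and `s`.
-/

section DoubleCover

lemma irreducible_X_sq_sub_C {R : Type*} [CommRing R] [IsDomain R] {F : R} (hF : ¬IsSquare F) :
    Irreducible (Polynomial.X ^ 2 - Polynomial.C F) := by
  have hmonic := Polynomial.monic_X_pow_sub_C F two_ne_zero
  have hdeg : (Polynomial.X ^ 2 - Polynomial.C F).natDegree = 2 := Polynomial.natDegree_X_pow_sub_C
  rw [hmonic.irreducible_iff_roots_eq_zero_of_degree_le_three hdeg.ge (by omega)]
  refine Multiset.eq_zero_of_forall_notMem fun g hg => hF ⟨g, ?_⟩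
  have hroot : g ^ 2 - F = 0 := by simpa using Polynomial.isRoot_of_mem_roots hg
  rw [← pow_two, sub_eq_zero.mp hroot]

lemma eval₂_eq_zero_iff_dvd_of_irreducible {R S : Type*} [CommRing R] [IsDomain R]
    [IsIntegrallyClosed R] [CommRing S] [IsDomain S] {f : R →+* S} (hf : Function.Injective f)
    {P : Polynomial R} (hmonic : P.Monic) (hirr : Irreducible P) {z : S} (hz : P.eval₂ f z = 0)
    (Q : Polynomial R) : Q.eval₂ f z = 0 ↔ P ∣ Q := by
  algebraize [f]
  have : FaithfulSMul R S := (faithfulSMul_iff_algebraMap_injective R S).mpr hf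
  have hint : IsIntegral R z := ⟨P, hmonic, hz⟩
  have hassoc : Associated (minpoly R z) P :=
    (minpoly.prime_of_isIntegrallyClosed hint).irreducible.associated_of_dvd hirr
      ((minpoly.isIntegrallyClosed_dvd_iff hint P).mp hz)
  exact (minpoly.isIntegrallyClosed_dvd_iff hint Q).trans hassoc.dvd_iff_dvd_left

/-- Polynomials in `n + 1` variables as univariate polynomials in the last variable. -/
noncomputable def finSuccLastEquiv (R : Type*) [CommSemiring R] (n : ℕ) :
    MvPolynomial (Fin (n + 1)) R ≃ₐ[R] Polynomial (MvPolynomial (Fin n) R) :=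
  (renameEquiv R finSuccEquivLast).trans (optionEquivLeft R (Fin n))

@[simp]
lemma finSuccLastEquiv_X_castSucc (R : Type*) [CommSemiring R] {n : ℕ} (i : Fin n) :
    finSuccLastEquiv R n (X i.castSucc) = Polynomial.C (X i) := by
  simp [finSuccLastEquiv]

@[simp]
lemma finSuccLastEquiv_X_last (R : Type*) [CommSemiring R] (n : ℕ) :
    finSuccLastEquiv R n (X (Fin.last n)) = Polynomial.X := by
  simp [finSuccLastEquiv]

lemma aeval_snoc_eq_eval₂ {R A : Type*} [CommSemiring R] [CommSemiring A] [Algebra R A] {n : ℕ}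
    (v : Fin n → A) (z : A) (f : MvPolynomial (Fin (n + 1)) R) :
    aeval (Fin.snoc v z : Fin (n + 1) → A) f =
      (finSuccLastEquiv R n f).eval₂ (aeval v : MvPolynomial (Fin n) R →ₐ[R] A).toRingHom z := by
  induction f using MvPolynomial.induction_on with
  | C c => simp [finSuccLastEquiv]
  | add f g hf hg => simp [hf, hg, Polynomial.eval₂_add]
  | mul_X f i hf =>
    rw [map_mul, map_mul, Polynomial.eval₂_mul, hf]
    refine Fin.lastCases ?_ (fun j => ?_) i <;> simp

lemma isDomain_and_exists_fractionRing_algHom {k A K : Type*} [CommRing k] [CommRing A]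
    [Algebra k A] [Field K] [Algebra k K] (ψ : A →ₐ[k] K) {I : Ideal A} (hI : RingHom.ker ψ = I) :
    IsDomain (A ⧸ I) ∧ ∃ φ : FractionRing (A ⧸ I) →ₐ[k] K, Function.Injective φ := by
  subst hI
  have : IsDomain (A ⧸ RingHom.ker ψ) :=
    (Ideal.Quotient.isDomain_iff_prime _).mpr (RingHom.ker_isPrime ψ)
  exact ⟨this, IsFractionRing.liftAlgHom (Ideal.kerLiftAlg_injective ψ), RingHom.injective _⟩

variable {k : Type*} [Field k] {a b : ℕ}

lemma not_isSquare_X_pow_sub_one_mul (ha : (a : k) ≠ 0) (hb : b ≠ 0) :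
    ¬IsSquare (((X 0 : MvPolynomial (Fin 2) k) ^ a - 1) * (X 1 ^ b - 1)) := by
  -- On the line `y = 0` the product becomes `-(xᵃ - 1)`, which is squarefree and not a unit.
  rintro ⟨g, hg⟩
  have ha0 : a ≠ 0 := by rintro rfl; simp at ha
  set g₀ : Polynomial k := aeval ![Polynomial.X, 0] g
  have hg₀ : -(Polynomial.X ^ a - 1) = g₀ * g₀ := by
    simpa [hb] using congrArg (aeval ![(Polynomial.X : Polynomial k), 0]) hg
  have hsqfree : Squarefree (Polynomial.X ^ a - 1 : Polynomial k) := by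
    simpa using (Polynomial.separable_X_pow_sub_C (1 : k) ha one_ne_zero).squarefree
  have hg₀_unit : IsUnit g₀ := hsqfree g₀ (by rw [← hg₀, neg_dvd])
  have hX_unit : IsUnit (Polynomial.X ^ a - Polynomial.C 1 : Polynomial k) := by
    rw [map_one, ← IsUnit.neg_iff, hg₀]
    exact hg₀_unit.mul hg₀_unit
  have hdeg := Polynomial.natDegree_eq_zero_of_isUnit hX_unit
  exact ha0 (by rwa [Polynomial.natDegree_X_pow_sub_C] at hdeg)

lemma ker_aeval_snoc_eq_span_xabPoly {K : Type*} [CommRing K] [IsDomain K] [Algebra k K]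
    (ha : (a : k) ≠ 0) (hb : b ≠ 0) {v : Fin 2 → K} (hv : AlgebraicIndependent k v) {z : K}
    (hz : (v 0 ^ a - 1) * (v 1 ^ b - 1) = z * z) :
    RingHom.ker (aeval (Fin.snoc v z : Fin 3 → K) : MvPolynomial (Fin 3) k →ₐ[k] K) =
      Ideal.span {xabPoly k a b} := by
  set F : MvPolynomial (Fin 2) k := (X 0 ^ a - 1) * (X 1 ^ b - 1) with hF
  have hxab : finSuccLastEquiv k 2 (xabPoly k a b) = Polynomial.X ^ 2 - Polynomial.C F := by
    have h0 := finSuccLastEquiv_X_castSucc k (0 : Fin 2)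
    have h1 := finSuccLastEquiv_X_castSucc k (1 : Fin 2)
    have h2 := finSuccLastEquiv_X_last k 2
    simp_all [xabPoly]
  ext f
  rw [RingHom.mem_ker, Ideal.mem_span_singleton, aeval_snoc_eq_eval₂,
    ← map_dvd_iff (finSuccLastEquiv k 2), hxab]
  refine eval₂_eq_zero_iff_dvd_of_irreducible hv (Polynomial.monic_X_pow_sub_C F two_ne_zero)
    (irreducible_X_sq_sub_C (not_isSquare_X_pow_sub_one_mul ha hb)) ?_ _
  have hFz : aeval v F = z * z := by simpa [hF] using hz
  simp [hFz, pow_two]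

end DoubleCover

section Transcendence

lemma transcendental_of_mul_algebraMap_eq {k R K S : Type*} [Field k] [CommRing R]
    [IsIntegrallyClosed R] [Algebra k R] [CommRing K] [Algebra R K] [IsFractionRing R K]
    [Algebra k K] [IsScalarTower k R K] [CommSemiring S] (f : R →+* S) {M N : R} {r : K}
    (hr : r * algebraMap R K M = algebraMap R K N) (hM : f M = 0) (hN : f N ≠ 0) :
    Transcendental k r := by
  -- An algebraic `r` is integral over `k`, so it lies in the integrally closed ring `R`.
  intro halg
  obtain ⟨g, rfl⟩ := IsIntegrallyClosed.isIntegral_iff.mp (halg.isIntegral.tower_top (A := R))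
  have hgM : g * M = N := IsFractionRing.injective R K (by rw [map_mul, hr])
  exact hN (by rw [← hgM, map_mul, hM, mul_zero])

variable {ι R A : Type*} [CommRing R] [CommRing A] [Algebra R A]

lemma isAlgebraic_adjoin_range [Nontrivial A] (v : ι → A) (i : ι) :
    IsAlgebraic (Algebra.adjoin R (Set.range v)) (v i) :=
  isAlgebraic_algebraMap
    (⟨v i, Algebra.subset_adjoin ⟨i, rfl⟩⟩ : Algebra.adjoin R (Set.range v))

lemma isTranscendenceBasis_of_isAlgebraic_adjoin [IsDomain A] [Finite ι]
    {b v : ι → A} (hb : IsTranscendenceBasis R b)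
    (h : ∀ i, IsAlgebraic (Algebra.adjoin R (Set.range v)) (b i)) :
    IsTranscendenceBasis R v := by
  have := (algebraMap R A).domain_nontrivial
  have : FaithfulSMul R A :=
    (faithfulSMul_iff_algebraMap_injective R A).mpr hb.1.algebraMap_injective
  have := hb.isAlgebraic_iff.mpr h
  exact Algebra.IsAlgebraic.isTranscendenceBasis_of_lift_le_trdeg_of_finite R v
    hb.lift_cardinalMk_eq_trdeg.le

end Transcendence

section Cayley

/-- The Cayley transform `u ↦ (u + 1) / (u - 1)`, with the junk value `0` at `u = 1`. -/
def cayley {K : Type*} [Field K] (u : K) : K := (u + 1) / (u - 1)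

variable {K : Type*} [Field K]

lemma cayley_cayley (h2 : (2 : K) ≠ 0) {u : K} (hu : u ≠ 1) : cayley (cayley u) = u := by
  have hu' : u - 1 ≠ 0 := sub_ne_zero.mpr hu
  have hadd : cayley u + 1 = 2 * u / (u - 1) := by rw [cayley]; field_simp; ring
  have hsub : cayley u - 1 = 2 / (u - 1) := by rw [cayley]; field_simp; ring
  rw [cayley, hadd, hsub]
  field_simp

lemma isAlgebraic_cayley {R : Type*} [CommRing R] [IsDomain R] [Algebra R K] {u : K}
    (hu : IsAlgebraic R u) : IsAlgebraic R (cayley u) := by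
  rw [cayley, div_eq_mul_inv]
  exact (hu.add isAlgebraic_one).mul (hu.sub isAlgebraic_one).inv

lemma isTranscendenceBasis_cayley_pow {ι k : Type*} [Finite ι] [CommRing k] [Nontrivial k]
    [Algebra k K] (h2 : (2 : K) ≠ 0) {u : ι → K} (hu : IsTranscendenceBasis k u) {n : ι → ℕ}
    (hn : ∀ i, 0 < n i) : IsTranscendenceBasis k fun i => cayley (u i) ^ n i := by
  refine isTranscendenceBasis_of_isAlgebraic_adjoin hu fun i => ?_
  have hui : u i ≠ 1 := fun h => hu.1.transcendental i (h ▸ isAlgebraic_one)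
  rw [← cayley_cayley h2 hui]
  exact isAlgebraic_cayley
    ((isAlgebraic_adjoin_range (fun i => cayley (u i) ^ n i) i).of_pow (hn i))

variable {p : ℕ} [ExpChar K p] (ν : ℕ)

lemma cayley_pow_sub_one {u : K} (hu : u ≠ 1) :
    cayley u ^ (p ^ ν + 1) - 1 = 2 * (u ^ p ^ ν + u) / (u - 1) ^ (p ^ ν + 1) := by
  have hden : (u - 1) ^ (p ^ ν + 1) ≠ 0 := pow_ne_zero _ (sub_ne_zero.mpr hu)
  rw [cayley, div_pow, div_sub_one hden]
  congr 1
  rw [pow_succ, pow_succ, add_pow_expChar_pow, sub_pow_expChar_pow, one_pow]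
  ring

lemma isSquare_cayley_pow_sub_one_mul (hp : Odd p) {u r : K} (hu : u ≠ 1) (hr : r ≠ 1)
    (h : IsSquare ((u ^ p ^ ν + u) * (r ^ p ^ ν + r))) :
    IsSquare ((cayley u ^ (p ^ ν + 1) - 1) * (cayley r ^ (p ^ ν + 1) - 1)) := by
  have heven : Even (p ^ ν + 1) := hp.pow.add_one
  rw [cayley_pow_sub_one ν hu, cayley_pow_sub_one ν hr, div_mul_div_comm, mul_mul_mul_comm]
  exact ((IsSquare.mul_self 2).mul h).div ((heven.isSquare_pow _).mul (heven.isSquare_pow _))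

end Cayley

section Parametrization

lemma pow_add_self_eq_of_mul_eq {R : Type*} [CommRing R] {p : ℕ} [ExpChar R p] {ν : ℕ}
    {e s r : R} (hr : r * (s ^ (p ^ ν * (p ^ ν + 1)) - s ^ (p ^ ν + 1)) = e ^ p ^ ν + e) :
    (e + r * s ^ (p ^ ν + 1)) ^ p ^ ν + (e + r * s ^ (p ^ ν + 1)) =
      (r ^ p ^ ν + r) * s ^ (p ^ ν * (p ^ ν + 1)) := by
  rw [add_pow_expChar_pow, mul_pow, ← pow_mul, mul_comm (p ^ ν + 1)]
  linear_combination -hr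

lemma isTranscendenceBasis_of_pow_add_self_eq {k K : Type*} [CommRing k] [Field K] [Algebra k K]
    {q : ℕ} (hq : 0 < q) {e s r : K} (hes : IsTranscendenceBasis k ![e, s])
    (hr : r ^ q + r ≠ 0)
    (h : (e + r * s ^ (q + 1)) ^ q + (e + r * s ^ (q + 1)) = (r ^ q + r) * s ^ (q * (q + 1))) :
    IsTranscendenceBasis k ![e + r * s ^ (q + 1), r] := by
  set u := e + r * s ^ (q + 1) with hu
  have hu_alg : IsAlgebraic (Algebra.adjoin k (Set.range ![u, r])) u :=
    isAlgebraic_adjoin_range ![u, r] 0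
  have hr_alg : IsAlgebraic (Algebra.adjoin k (Set.range ![u, r])) r :=
    isAlgebraic_adjoin_range ![u, r] 1
  have hs_alg : IsAlgebraic (Algebra.adjoin k (Set.range ![u, r])) s := by
    refine IsAlgebraic.of_pow (n := q * (q + 1)) (by positivity) ?_
    rw [eq_div_of_mul_eq hr ((mul_comm _ _).trans h.symm), div_eq_mul_inv]
    exact ((hu_alg.pow q).add hu_alg).mul ((hr_alg.pow q).add hr_alg).inv
  have he_alg : IsAlgebraic (Algebra.adjoin k (Set.range ![u, r])) e := by
    rw [eq_sub_of_add_eq hu.symm]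
    exact hu_alg.sub (hr_alg.mul (hs_alg.pow _))
  refine isTranscendenceBasis_of_isAlgebraic_adjoin hes fun i => ?_
  fin_cases i
  exacts [he_alg, hs_alg]

variable (k : Type*) [Field k]

lemma two_ne_zero_of_charP {R : Type*} [NonAssocSemiring R] [Nontrivial R] {p : ℕ} [CharP R p]
    (hp2 : p ≠ 2) : (2 : R) ≠ 0 :=
  Ring.two_ne_zero (by rwa [ringChar.eq_iff.mpr ‹CharP R p›])

lemma isTranscendenceBasis_algebraMap_X_zero_X_one :
    IsTranscendenceBasis k
      ![algebraMap (MvPolynomial (Fin 2) k) (FractionRing (MvPolynomial (Fin 2) k)) (X 0),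
        algebraMap (MvPolynomial (Fin 2) k) (FractionRing (MvPolynomial (Fin 2) k)) (X 1)] := by
  have := IsLocalization.isAlgebraic (FractionRing (MvPolynomial (Fin 2) k))
    (nonZeroDivisors (MvPolynomial (Fin 2) k))
  convert (IsTranscendenceBasis.mvPolynomial (Fin 2) k).algebraMap_comp
    (A := FractionRing (MvPolynomial (Fin 2) k)) using 1
  funext i
  fin_cases i <;> rfl

lemma exists_isTranscendenceBasis_transcendental_mul_eq (h2 : (2 : k) ≠ 0) {q : ℕ} (hq : 1 < q) :
    ∃ e s r : FractionRing (MvPolynomial (Fin 2) k), IsTranscendenceBasis k ![e, s] ∧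
      Transcendental k r ∧ r * (s ^ (q * (q + 1)) - s ^ (q + 1)) = e ^ q + e := by
  set N : MvPolynomial (Fin 2) k := X 0 ^ q + X 0 with hN
  set M : MvPolynomial (Fin 2) k := X 1 ^ (q * (q + 1)) - X 1 ^ (q + 1) with hM
  set ι := algebraMap (MvPolynomial (Fin 2) k) (FractionRing (MvPolynomial (Fin 2) k))
  have hbasis := isTranscendenceBasis_algebraMap_X_zero_X_one k
  have hs : Transcendental k (ι (X 1)) := hbasis.1.transcendental 1
  have hM0 : ι M ≠ 0 := by
    have hlt : q + 1 < q * (q + 1) := by nlinarith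
    have hmonic := Polynomial.monic_X_pow_sub (R := k) (n := q * (q + 1))
      (p := Polynomial.X ^ (q + 1)) (by rw [Polynomial.degree_X_pow]; exact_mod_cast hlt)
    exact fun h => hmonic.ne_zero (transcendental_iff.mp hs _ (by simpa [hM] using h))
  have hrMN : ι N / ι M * ι M = ι N := div_mul_cancel₀ _ hM0
  have hr : Transcendental k (ι N / ι M) := by
    refine transcendental_of_mul_algebraMap_eq (eval ![1, 0]) hrMN ?_ ?_
    · simp [hM, (zero_lt_one.trans hq).ne']
    · simpa [hN, one_add_one_eq_two] using h2
  exact ⟨ι (X 0), ι (X 1), ι N / ι M, hbasis, hr, by simpa [hN, hM] using hrMN⟩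

lemma pow_add_self_ne_zero_of_transcendental {R A : Type*} [CommRing R] [Nontrivial R] [Ring A]
    [Algebra R A] {q : ℕ} (hq : 1 < q) {r : A} (hr : Transcendental R r) : r ^ q + r ≠ 0 := by
  have hmonic := Polynomial.monic_X_pow_add (R := R) (n := q) (p := Polynomial.X)
    (by rw [Polynomial.degree_X]; exact_mod_cast hq)
  exact fun h => hmonic.ne_zero (transcendental_iff.mp hr _ (by simpa using h))

lemma exists_isTranscendenceBasis_isSquare_pow_add_self_mul {p ν : ℕ} [CharP k p] (hp : p.Prime)
    (hp2 : p ≠ 2) (hν : ν ≠ 0) :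
    ∃ u : Fin 2 → FractionRing (MvPolynomial (Fin 2) k), IsTranscendenceBasis k u ∧
      IsSquare ((u 0 ^ p ^ ν + u 0) * (u 1 ^ p ^ ν + u 1)) := by
  have : ExpChar (FractionRing (MvPolynomial (Fin 2) k)) p :=
    have : ExpChar k p := .prime hp
    expChar_of_injective_algebraMap (algebraMap k _).injective p
  have hq : 1 < p ^ ν := Nat.one_lt_pow hν hp.one_lt
  obtain ⟨e, s, r, hes, hr, hrs⟩ :=
    exists_isTranscendenceBasis_transcendental_mul_eq k (two_ne_zero_of_charP hp2) hq
  have hu := pow_add_self_eq_of_mul_eq hrs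
  refine ⟨![e + r * s ^ (p ^ ν + 1), r], isTranscendenceBasis_of_pow_add_self_eq
    (zero_lt_one.trans hq) hes (pow_add_self_ne_zero_of_transcendental hq hr) hu, ?_⟩
  have heven : Even (p ^ ν * (p ^ ν + 1)) := Nat.even_mul_succ_self _
  simp only [Matrix.cons_val_zero, Matrix.cons_val_one, hu]
  rw [mul_right_comm]
  exact (IsSquare.mul_self _).mul (heven.isSquare_pow s)

lemma exists_algebraicIndependent_isSquare_pow_sub_one_mul {p ν : ℕ} [CharP k p] (hp : p.Prime)
    (hp2 : p ≠ 2) (hν : ν ≠ 0) {a b : ℕ} (ha : a ∣ p ^ ν + 1) (hb : b ∣ p ^ ν + 1) :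
    ∃ v : Fin 2 → FractionRing (MvPolynomial (Fin 2) k), AlgebraicIndependent k v ∧
      IsSquare ((v 0 ^ a - 1) * (v 1 ^ b - 1)) := by
  obtain ⟨c, hc⟩ := ha
  obtain ⟨d, hd⟩ := hb
  have hcd : ∀ i, 0 < ![c, d] i := by
    have hc0 : 0 < c := Nat.pos_of_ne_zero (by rintro rfl; simp at hc)
    have hd0 : 0 < d := Nat.pos_of_ne_zero (by rintro rfl; simp at hd)
    simp [Fin.forall_fin_two, hc0, hd0]
  obtain ⟨u, hu, hsq⟩ := exists_isTranscendenceBasis_isSquare_pow_add_self_mul k hp hp2 hν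
  have : CharP (FractionRing (MvPolynomial (Fin 2) k)) p :=
    charP_of_injective_algebraMap (algebraMap k _).injective p
  have : ExpChar (FractionRing (MvPolynomial (Fin 2) k)) p := .prime hp
  have hu1 (i) : u i ≠ 1 := fun h => hu.1.transcendental i (h ▸ isAlgebraic_one)
  refine ⟨fun i => cayley (u i) ^ ![c, d] i,
    (isTranscendenceBasis_cayley_pow (two_ne_zero_of_charP hp2) hu hcd).1, ?_⟩
  simpa [← pow_mul, mul_comm c, mul_comm d, ← hc, ← hd] using
    isSquare_cayley_pow_sub_one_mul ν (hp.odd_of_ne_two hp2) (hu1 0) (hu1 1) hsq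

end Parametrization

lemma natCast_ne_zero_of_dvd_pow_add_one {R : Type*} [AddMonoidWithOne R] {p : ℕ} [CharP R p]
    (hp : p.Prime) {ν n : ℕ} (hν : ν ≠ 0) (hn : n ∣ p ^ ν + 1) : (n : R) ≠ 0 := fun h =>
  have hdvd : p ∣ p ^ ν + 1 := ((CharP.cast_eq_zero_iff R p n).mp h).trans hn
  hp.one_lt.ne' (Nat.dvd_one.mp ((Nat.dvd_add_right (dvd_pow_self p hν)).mp hdvd))

theorem stmt_11_general (k : Type*) [Field k] (p : ℕ) [CharP k p] (hp : p.Prime) (hp3 : 3 ≤ p)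
    (a b : ℕ) (hν : ∃ ν : ℕ, 0 < ν ∧ Nat.lcm a b ∣ p ^ ν + 1) :
    IsDomain (XabRing k a b) ∧
    ∃ φ : FractionRing (XabRing k a b) →ₐ[k] FractionRing (MvPolynomial (Fin 2) k),
      Function.Injective φ := by
  obtain ⟨ν, hν0, hdvd⟩ := hν
  obtain ⟨ha, hb⟩ := Nat.lcm_dvd_iff.mp hdvd
  have hak : (a : k) ≠ 0 := natCast_ne_zero_of_dvd_pow_add_one hp hν0.ne' ha
  have hb0 : b ≠ 0 := ne_zero_of_dvd_ne_zero (Nat.succ_ne_zero _) hb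
  obtain ⟨v, hv, z, hz⟩ :=
    exists_algebraicIndependent_isSquare_pow_sub_one_mul k hp (by omega) hν0.ne' ha hb
  exact isDomain_and_exists_fractionRing_algHom _ (ker_aeval_snoc_eq_span_xabPoly hak hb0 hv hz)

/-- Let `k` be an algebraically closed field of characteristic `p ≥ 3`, let `a, b` be
positive integers, `m = lcm(a,b)`, and suppose `p^ν ≡ −1 (mod m)` for some positive `ν`.
Then the surface `X_{a,b} : z² = (xᵃ − 1)(yᵇ − 1)` is unirational: its coordinate ring is
an integral domain, and there is an injective `k`-algebra homomorphism from its fraction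
field into the fraction field `k(t₁, t₂)` of the polynomial ring in two variables. -/
theorem stmt_11 (k : Type*) [Field k] [IsAlgClosed k]
    (p : ℕ) [CharP k p] (hp : p.Prime) (hp3 : 3 ≤ p)
    (a b : ℕ) (ha : 0 < a) (hb : 0 < b)
    (hν : ∃ ν : ℕ, 0 < ν ∧ Nat.lcm a b ∣ p ^ ν + 1) :
    IsDomain (XabRing k a b) ∧
    ∃ φ : FractionRing (XabRing k a b) →+* FractionRing (MvPolynomial (Fin 2) k),
      Function.Injective φ ∧
      ∀ c : k,
        φ (algebraMap (XabRing k a b) (FractionRing (XabRing k a b))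
            (Ideal.Quotient.mk (Ideal.span {xabPoly k a b}) (C c))) =
        algebraMap (MvPolynomial (Fin 2) k) (FractionRing (MvPolynomial (Fin 2) k)) (C c) := by
  obtain ⟨hdom, φ, hφ⟩ := stmt_11_general k p hp hp3 a b hν
  exact ⟨hdom, φ, hφ, φ.commutes⟩
end

section
/- Let 𝓜 = {3, 5, 7, 8, 13, 17, 29, 31, 37, 41, 43, 44, 73} and let M = lcm of the elements of 𝓜 (so M = 8·3·5·7·11·13·17·29·31·37·41·43·73). Let S be the set of units u of ℤ/Mℤ such that for every m ∈ 𝓜 and every positive integer ν, the image of u^ν under the canonical ring homomorphism ℤ/Mℤ → ℤ/mℤ is not equal to −1. Then 2^25 · |S| = 5 · φ(M), where φ is Euler's totient function. -/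
/-- The set of Fermat degrees `𝓜 = {3, 5, 7, 8, 13, 17, 29, 31, 37, 41, 43, 44, 73}`. -/
def fermatDegrees : Finset ℕ := {3, 5, 7, 8, 13, 17, 29, 31, 37, 41, 43, 44, 73}

/-!
By the Chinese remainder theorem the density of the units avoiding `-1` is multiplicative over
coprime groups of moduli. For an odd prime `p` the group `(ℤ/p)ˣ` is cyclic, so `-1` is a power of
`u` exactly when `u` has even order, and a proportion `2 ^ (-v₂(p - 1))` of the units avoids `-1`;
the primes of `𝓜` contribute `2 ^ (-22)` in total. The moduli `8` and `44` are not coprime and are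
treated together modulo `88`, where `25` of the `40` units avoid `-1`. The total density is
`2 ^ (-22) * 25 / 40 = 5 * 2 ^ (-25)`.
-/

open Subgroup
open scoped Nat

section Group

variable {G : Type*}

theorem mem_zpowers_iff_exists_pos_pow_eq [Group G] {x y : G} (hx : IsOfFinOrder x) :
    y ∈ zpowers x ↔ ∃ n, 0 < n ∧ x ^ n = y := by
  rw [← hx.mem_powers_iff_mem_zpowers]
  constructor
  · rintro ⟨n, rfl⟩
    exact ⟨n + orderOf x, Nat.add_pos_right n hx.orderOf_pos,
      by rw [pow_add, pow_orderOf_eq_one, mul_one]⟩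
  · rintro ⟨n, -, rfl⟩
    exact ⟨n, rfl⟩

theorem mem_zpowers_iff_pow_eq_of_orderOf_eq_two [Group G] {x z : G} {q : ℕ}
    (hz : orderOf z = 2) (hq : Odd q) (hx : x ^ (2 * q) = 1) : z ∈ zpowers x ↔ x ^ q = z := by
  refine ⟨?_, fun h => h ▸ npow_mem_zpowers x q⟩
  rintro ⟨k, hk : x ^ k = z⟩
  have hz_sq : z ^ 2 = 1 := hz ▸ pow_orderOf_eq_one z
  have hz_ne : z ≠ 1 := fun h => by simp [h] at hz
  have hz_pow : z ^ q = z := by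
    obtain ⟨r, rfl⟩ := hq
    rw [pow_succ, pow_mul, hz_sq, one_pow, one_mul]
  have hz_eq : z = (x ^ q) ^ k := by
    rw [← hz_pow, ← hk, ← zpow_natCast, ← zpow_natCast, zpow_comm]
  have hx_sq : (x ^ q) ^ 2 = 1 := by rw [← pow_mul, mul_comm, hx]
  obtain ⟨j, rfl | rfl⟩ := Int.even_or_odd' k
  · refine absurd ?_ hz_ne
    rw [hz_eq, zpow_mul, zpow_ofNat, hx_sq, one_zpow]
  · rw [hz_eq, zpow_add_one, zpow_mul, zpow_ofNat, hx_sq, one_zpow, one_mul]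

variable [CommGroup G] [IsCyclic G] [Finite G]

theorem zpowers_eq_ker_powMonoidHom_orderOf (x : G) :
    zpowers x = (powMonoidHom (orderOf x) : G →* G).ker := by
  refine eq_of_le_of_card_ge ?_ ?_
  · rw [zpowers_le, MonoidHom.mem_ker, powMonoidHom_apply, pow_orderOf_eq_one]
  · rw [IsCyclic.card_powMonoidHom_ker, Nat.card_zpowers,
      Nat.gcd_eq_right (orderOf_dvd_natCard x)]

theorem mem_zpowers_iff_orderOf_dvd_orderOf {x y : G} :
    y ∈ zpowers x ↔ orderOf y ∣ orderOf x := by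
  rw [zpowers_eq_ker_powMonoidHom_orderOf, MonoidHom.mem_ker, powMonoidHom_apply,
    orderOf_dvd_iff_pow_eq_one]

theorem pow_factorization_mul_ncard_setOf_notMem_zpowers {p : ℕ} (hp : p.Prime) {z : G}
    (hz : orderOf z = p) :
    p ^ (Nat.card G).factorization p * {x : G | z ∉ zpowers x}.ncard = Nat.card G := by
  set q := ordCompl[p] (Nat.card G)
  have notMem_iff (x : G) : z ∉ zpowers x ↔ x ^ q = 1 := by
    rw [mem_zpowers_iff_orderOf_dvd_orderOf, hz, ← orderOf_dvd_iff_pow_eq_one]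
    exact ⟨Nat.dvd_ordCompl_of_dvd_not_dvd (orderOf_dvd_natCard x),
      fun h hpx => Nat.not_dvd_ordCompl hp Nat.card_pos.ne' (hpx.trans h)⟩
  have setOf_eq : {x : G | z ∉ zpowers x} = ((powMonoidHom q : G →* G).ker : Set G) :=
    Set.ext notMem_iff
  rw [setOf_eq, ← Nat.card_coe_set_eq, SetLike.coe_sort_coe, IsCyclic.card_powMonoidHom_ker,
    Nat.gcd_eq_right (Nat.ordCompl_dvd _ p), Nat.ordProj_mul_ordCompl_eq_self]

end Group

theorem orderOf_neg_one_zmod_units {m : ℕ} (hm : 2 < m) : orderOf (-1 : (ZMod m)ˣ) = 2 := by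
  have : Fact (1 < m) := ⟨one_lt_two.trans hm⟩
  rw [← orderOf_units, Units.coe_neg_one, orderOf_neg_one, ringChar.eq (ZMod m) m, if_neg hm.ne']

theorem bijective_unitsMap_prod {a b : ℕ} (hab : a.Coprime b) :
    Function.Bijective
      ((ZMod.unitsMap (dvd_mul_right a b)).prod (ZMod.unitsMap (dvd_mul_left b a))) := by
  convert ((Units.mapEquiv (ZMod.chineseRemainder hab).toMulEquiv).trans .prodUnits).bijective
    using 1
  ext u
  · exact (Prod.fst_zmod_cast (u : ZMod (a * b))).symm
  · exact (Prod.snd_zmod_cast (u : ZMod (a * b))).symm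

/-- The units `u` modulo `N` none of whose powers is `-1` modulo an element of `S`. Only the
elements of `S` dividing `N` impose a condition. -/
def unitsAvoidingNegOne (S : Finset ℕ) (N : ℕ) : Set (ZMod N)ˣ :=
  {u | ∀ m ∈ S, ∀ h : m ∣ N, -1 ∉ zpowers (ZMod.unitsMap h u)}

theorem unitsAvoidingNegOne_eq_setOf_castHom_pow_ne (S : Finset ℕ) (N : ℕ) [NeZero N] :
    unitsAvoidingNegOne S N = {u : (ZMod N)ˣ | ∀ m ∈ S, ∀ h : m ∣ N, ∀ ν : ℕ, 0 < ν →
      ZMod.castHom h (ZMod m) ((u : ZMod N) ^ ν) ≠ -1} := by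
  ext u
  refine forall₃_congr fun m _ h => ?_
  rw [mem_zpowers_iff_exists_pos_pow_eq ((ZMod.unitsMap h).isOfFinOrder (isOfFinOrder_of_finite u))]
  simp only [not_exists, not_and, ← map_pow, ← Units.val_inj, ZMod.unitsMap_def, Units.coe_map,
    Units.val_pow_eq_pow_val, Units.val_neg, Units.val_one, MonoidHom.coe_coe, ne_eq]

theorem unitsAvoidingNegOne_union (S T : Finset ℕ) (N : ℕ) :
    unitsAvoidingNegOne (S ∪ T) N = unitsAvoidingNegOne S N ∩ unitsAvoidingNegOne T N :=
  Set.ext fun _ => Finset.forall_mem_union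

theorem preimage_unitsMap_unitsAvoidingNegOne {S : Finset ℕ} {a N : ℕ} (ha : a ∣ N)
    (hS : ∀ m ∈ S, m ∣ a) :
    ZMod.unitsMap ha ⁻¹' unitsAvoidingNegOne S a = unitsAvoidingNegOne S N := by
  ext u
  refine forall₂_congr fun m hm => ?_
  rw [forall_prop_of_true (hS m hm), forall_prop_of_true ((hS m hm).trans ha),
    ← ZMod.unitsMap_comp (hS m hm) ha, MonoidHom.comp_apply]

theorem ncard_unitsAvoidingNegOne_union_mul {S T : Finset ℕ} {a b : ℕ} (hab : a.Coprime b)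
    (hS : ∀ m ∈ S, m ∣ a) (hT : ∀ m ∈ T, m ∣ b) :
    (unitsAvoidingNegOne (S ∪ T) (a * b)).ncard =
      (unitsAvoidingNegOne S a).ncard * (unitsAvoidingNegOne T b).ncard := by
  have bijective := bijective_unitsMap_prod hab
  rw [unitsAvoidingNegOne_union, ← preimage_unitsMap_unitsAvoidingNegOne (dvd_mul_right a b) hS,
    ← preimage_unitsMap_unitsAvoidingNegOne (dvd_mul_left b a) hT, ← Set.mk_preimage_prod,
    ← Set.ncard_prod]
  exact Set.ncard_preimage_of_injective_subset_range bijective.injective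
    (bijective.surjective.range_eq ▸ Set.subset_univ _)

theorem two_pow_mul_ncard_unitsAvoidingNegOne_singleton {m : ℕ} [IsCyclic (ZMod m)ˣ]
    (hm : 2 < m) :
    2 ^ (φ m).factorization 2 * (unitsAvoidingNegOne {m} m).ncard = φ m := by
  have : NeZero m := ⟨by lia⟩
  have avoiding_eq : unitsAvoidingNegOne {m} m = {u | -1 ∉ zpowers u} := by
    ext u
    simp [unitsAvoidingNegOne]
  have card_units : Nat.card (ZMod m)ˣ = φ m := by
    rw [Nat.card_eq_fintype_card, ZMod.card_units_eq_totient]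
  rw [avoiding_eq, ← card_units]
  exact pow_factorization_mul_ncard_setOf_notMem_zpowers Nat.prime_two
    (orderOf_neg_one_zmod_units hm)

theorem two_pow_mul_ncard_unitsAvoidingNegOne_prod {P : Finset ℕ}
    (pairwise_coprime : (P : Set ℕ).Pairwise Nat.Coprime) (two_lt : ∀ m ∈ P, 2 < m)
    (isCyclic_units : ∀ m ∈ P, IsCyclic (ZMod m)ˣ) :
    2 ^ (∑ m ∈ P, (φ m).factorization 2) * (unitsAvoidingNegOne P (∏ m ∈ P, m)).ncard =
      φ (∏ m ∈ P, m) := by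
  induction P using Finset.induction_on with
  | empty =>
    have avoiding_eq : unitsAvoidingNegOne ∅ 1 = Set.univ := by simp [unitsAvoidingNegOne]
    rw [Finset.sum_empty, Finset.prod_empty, avoiding_eq, Set.ncard_univ, Nat.card_unique,
      Nat.totient_one, pow_zero, one_mul]
  | insert m P hm ih =>
    rw [Finset.coe_insert, Set.pairwise_insert_of_symm_of_notMem (by simpa using hm)]
      at pairwise_coprime
    rw [Finset.forall_mem_insert] at two_lt isCyclic_units
    have := isCyclic_units.1
    have hcop : m.Coprime (∏ n ∈ P, n) := Nat.Coprime.prod_right pairwise_coprime.2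
    have ih := ih pairwise_coprime.1 two_lt.2 isCyclic_units.2
    have ncard_mul := ncard_unitsAvoidingNegOne_union_mul (S := {m}) (T := P) hcop (by simp)
      fun n hn => Finset.dvd_prod_of_mem id hn
    rw [Finset.sum_insert hm, Finset.prod_insert hm, Finset.insert_eq, ncard_mul, pow_add,
      mul_mul_mul_comm, two_pow_mul_ncard_unitsAvoidingNegOne_singleton two_lt.1, ih,
      Nat.totient_mul hcop]

theorem unitsAvoidingNegOne_eight_fortyFour :
    unitsAvoidingNegOne {8, 44} 88 =
      {u | ZMod.unitsMap (by decide : 8 ∣ 88) u ≠ -1 ∧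
        ZMod.unitsMap (by decide : 44 ∣ 88) u ^ 5 ≠ -1} := by
  have sq_eq_one : ∀ u : (ZMod 8)ˣ, u ^ (2 * 1) = 1 := by decide
  have pow_ten_eq_one : ∀ u : (ZMod 44)ˣ, u ^ (2 * 5) = 1 := by decide +kernel
  have neg_one_mem_zpowers_eight (u : (ZMod 8)ˣ) : -1 ∈ zpowers u ↔ u = -1 := by
    rw [mem_zpowers_iff_pow_eq_of_orderOf_eq_two (orderOf_neg_one_zmod_units (by norm_num))
      odd_one (sq_eq_one u), pow_one]
  have neg_one_mem_zpowers_fortyFour (u : (ZMod 44)ˣ) : -1 ∈ zpowers u ↔ u ^ 5 = -1 :=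
    mem_zpowers_iff_pow_eq_of_orderOf_eq_two (orderOf_neg_one_zmod_units (by norm_num))
      (by decide) (pow_ten_eq_one u)
  ext u
  simp only [unitsAvoidingNegOne, Finset.mem_insert, Finset.mem_singleton, forall_eq_or_imp,
    forall_eq, neg_one_mem_zpowers_eight, neg_one_mem_zpowers_fortyFour, ne_eq,
    forall_prop_of_true (by decide : 8 ∣ 88), forall_prop_of_true (by decide : 44 ∣ 88)]

theorem ncard_unitsAvoidingNegOne_eight_fortyFour :
    (unitsAvoidingNegOne {8, 44} 88).ncard = 25 := by
  rw [unitsAvoidingNegOne_eight_fortyFour, Set.ncard_eq_toFinset_card']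
  decide +kernel

/-- The primes in `𝓜`, that is, all its elements except `8` and `44`. -/
def fermatPrimeDegrees : Finset ℕ := {p ∈ fermatDegrees | p.Prime}

theorem fermatDegrees_eq_union : fermatDegrees = {8, 44} ∪ fermatPrimeDegrees := by
  decide +kernel

theorem lcm_fermatDegrees : fermatDegrees.lcm id = 88 * ∏ p ∈ fermatPrimeDegrees, p := by
  decide +kernel

theorem two_pow_mul_ncard_unitsAvoidingNegOne_fermatPrimeDegrees :
    2 ^ 22 * (unitsAvoidingNegOne fermatPrimeDegrees (∏ p ∈ fermatPrimeDegrees, p)).ncard =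
      φ (∏ p ∈ fermatPrimeDegrees, p) := by
  have prime_of_mem {p : ℕ} (hp : p ∈ fermatPrimeDegrees) : p.Prime := (Finset.mem_filter.1 hp).2
  have two_lt : ∀ p ∈ fermatPrimeDegrees, 2 < p := by decide +kernel
  have sum_factorization : ∑ p ∈ fermatPrimeDegrees, (φ p).factorization 2 = 22 := by
    decide +kernel
  rw [← sum_factorization]
  refine two_pow_mul_ncard_unitsAvoidingNegOne_prod ?_ two_lt fun p hp => ?_
  · exact fun p hp q hq => (Nat.coprime_primes (prime_of_mem hp) (prime_of_mem hq)).2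
  · have : Fact p.Prime := ⟨prime_of_mem hp⟩
    infer_instance

/-- Let `M` be the lcm of the elements of `𝓜` (so `M = 8·3·5·7·11·13·17·29·31·37·41·43·73`)
and let `S` be the set of units `u` of `ℤ/M` such that for every `m ∈ 𝓜` and every positive
integer `ν`, the image of `u^ν` under the canonical ring homomorphism `ℤ/M → ℤ/m` is not
`−1`. Then `2^25 · |S| = 5 · φ(M)`. -/
theorem stmt_14 :
    fermatDegrees.lcm id = 8 * 3 * 5 * 7 * 11 * 13 * 17 * 29 * 31 * 37 * 41 * 43 * 73 ∧
    2 ^ 25 *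
        {u : (ZMod (fermatDegrees.lcm id))ˣ |
          ∀ m ∈ fermatDegrees, ∀ h : m ∣ fermatDegrees.lcm id, ∀ ν : ℕ, 0 < ν →
            ZMod.castHom h (ZMod m) ((u : ZMod (fermatDegrees.lcm id)) ^ ν) ≠ -1}.ncard
      = 5 * Nat.totient (fermatDegrees.lcm id) := by
  refine ⟨by decide +kernel, ?_⟩
  have : NeZero (fermatDegrees.lcm id) := ⟨by decide +kernel⟩
  have hcop : Nat.Coprime 88 (∏ p ∈ fermatPrimeDegrees, p) := by decide +kernel
  have ncard_mul := ncard_unitsAvoidingNegOne_union_mul (S := {8, 44}) (T := fermatPrimeDegrees)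
    hcop (by simp) fun p hp => Finset.dvd_prod_of_mem id hp
  have totient_88 : φ 88 = 40 := by decide +kernel
  rw [← unitsAvoidingNegOne_eq_setOf_castHom_pow_ne, lcm_fermatDegrees, fermatDegrees_eq_union,
    ncard_mul, ncard_unitsAvoidingNegOne_eight_fortyFour, Nat.totient_mul hcop, totient_88,
    ← two_pow_mul_ncard_unitsAvoidingNegOne_fermatPrimeDegrees]
  ring
end

section
/- The number 67665781 is prime; for every m ∈ 𝓜 = {3, 5, 7, 8, 13, 17, 29, 31, 37, 41, 43, 44, 73} and every positive integer ν, one has 67665781^ν ≢ −1 (mod m); and every prime q with 2 < q < 67665781 satisfies: there exist m ∈ 𝓜 and a positive integer ν with q^ν ≡ −1 (mod m). -/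
/-! Whether `-1` is a power of `a` modulo `m` depends only on `a` modulo `m` and is settled by the
exponents up to `m`. Few residues prime to `m` fail to have `-1` as a power (only `1` for
`m = 3, 5, 17`), so sieving one modulus after another leaves few classes modulo
`3 * 5 * 17 * 8 * 41 * 73 * 13 > 67665781`. Below `67665781` the other degrees eliminate all of
them except `1` and the composite number `60050461 = 787 * 76303`. -/

namespace Horikawa

/-- Some power of `a` with positive exponent is congruent to `-1` modulo `m`. -/
def HasNegOnePow (m a : ℕ) : Prop := ∃ ν : ℕ, 0 < ν ∧ m ∣ a ^ ν + 1

/-- `a` is a unit modulo `m` that does not have `-1` as a power: the residues that the sieve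
retains. -/
def Escapes (m a : ℕ) : Prop := a.Coprime m ∧ ¬ HasNegOnePow m a

section HasNegOnePow

variable {m a b : ℕ}

lemma HasNegOnePow.coprime (h : HasNegOnePow m a) : a.Coprime m := by
  obtain ⟨ν, hν, hdvd⟩ := h
  have hpow : (a ^ ν).Coprime (a ^ ν + 1) := by simp
  exact ((Nat.coprime_pow_left_iff hν _ _).mp hpow).coprime_dvd_right hdvd

lemma HasNegOnePow.congr (hab : a ≡ b [MOD m]) (h : HasNegOnePow m a) : HasNegOnePow m b := by
  obtain ⟨ν, hν, hdvd⟩ := h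
  exact ⟨ν, hν, (((hab.pow ν).add_right 1).dvd_iff dvd_rfl).mp hdvd⟩

lemma Escapes.congr (hab : a ≡ b [MOD m]) (h : Escapes m a) : Escapes m b :=
  ⟨hab.gcd_eq.symm.trans h.1, fun hb ↦ h.2 (hb.congr hab.symm)⟩

lemma pow_add_totient_mul_modEq (h : a.Coprime m) (k n : ℕ) :
    a ^ (k + m.totient * n) ≡ a ^ k [MOD m] := by
  rw [pow_add, pow_mul]
  simpa using ((Nat.ModEq.pow_totient h).pow n).mul_left (a ^ k)

lemma hasNegOnePow_iff_exists_lt : HasNegOnePow m a ↔ ∃ k < m, m ∣ a ^ (k + 1) + 1 := by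
  refine ⟨fun h ↦ ?_, fun ⟨k, _, hdvd⟩ ↦ ⟨k + 1, k.succ_pos, hdvd⟩⟩
  have hcop := h.coprime
  obtain ⟨ν, hν, hdvd⟩ := h
  have hm : 0 < m := Nat.pos_of_dvd_of_pos hdvd (Nat.succ_pos _)
  have hk : (ν - 1) % m.totient < m.totient := Nat.mod_lt _ (Nat.totient_pos.mpr hm)
  have hν' : ν = (ν - 1) % m.totient + 1 + m.totient * ((ν - 1) / m.totient) := by
    have := Nat.mod_add_div (ν - 1) m.totient
    omega
  have hpow : a ^ ν ≡ a ^ ((ν - 1) % m.totient + 1) [MOD m] := by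
    conv_lhs => rw [hν']
    exact pow_add_totient_mul_modEq hcop _ _
  exact ⟨_, hk.trans_le m.totient_le, ((hpow.add_right 1).dvd_iff dvd_rfl).mp hdvd⟩

instance (m a : ℕ) : Decidable (HasNegOnePow m a) :=
  decidable_of_iff _ hasNegOnePow_iff_exists_lt.symm

instance (m a : ℕ) : Decidable (Escapes m a) :=
  inferInstanceAs (Decidable (_ ∧ _))

end HasNegOnePow

section Sieve

variable (P : ℕ → ℕ → Prop) [∀ m, DecidablePred (P m)]

/-- Residues modulo the product of a list of moduli that satisfy `P m` for each modulus `m`. The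
moduli are sieved out from the end of the list, so that the classes surviving the tail `ms` are
lifted to classes modulo `m * ms.prod` before `P m` is tested. -/
def sieve : List ℕ → List ℕ
  | [] => [0]
  | m :: ms => (sieve ms).flatMap fun r ↦
      ((List.range m).map fun k ↦ r + ms.prod * k).filter (P m ·)

variable {P}

lemma mod_prod_mem_sieve (hP : ∀ ⦃m a b : ℕ⦄, a ≡ b [MOD m] → P m a → P m b) {q : ℕ} :
    ∀ {ms : List ℕ}, (∀ m ∈ ms, 0 < m) → (∀ m ∈ ms, P m q) → q % ms.prod ∈ sieve P ms
  | [], _, _ => by simp [sieve, Nat.mod_one]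
  | m :: ms, hpos, hq => by
    rw [List.forall_mem_cons] at hpos hq
    have htail : q % ms.prod ∈ sieve P ms := mod_prod_mem_sieve hP hpos.2 hq.2
    have hlift : q % (m * ms.prod) = q % ms.prod + ms.prod * (q / ms.prod % m) := by
      rw [mul_comm, Nat.mod_mul]
    have hhead : P m (q % (m * ms.prod)) :=
      hP ((Nat.mod_modEq q _).of_mul_right _).symm hq.1
    rw [List.prod_cons, sieve, List.mem_flatMap]
    refine ⟨_, htail, List.mem_filter.mpr ⟨?_, decide_eq_true hhead⟩⟩
    exact List.mem_map.mpr ⟨_, List.mem_range.mpr (Nat.mod_lt _ hpos.1), hlift.symm⟩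

end Sieve

/-- The degrees used for sieving: their product exceeds `67665781`, so that a residue modulo it
determines a number below that bound. -/
def sieveModuli : List ℕ := [13, 73, 41, 8, 17, 5, 3]

lemma eq_of_mem_sieve_of_forall_escapes :
    ∀ q ∈ sieve Escapes sieveModuli, q < 67665781 →
      (∀ m ∈ fermatDegrees, Escapes m q) → q = 1 ∨ q = 60050461 := by
  decide +kernel

lemma eq_of_forall_escapes {q : ℕ} (hlt : q < 67665781)
    (h : ∀ m ∈ fermatDegrees, Escapes m q) : q = 1 ∨ q = 60050461 := by
  have hdegrees : ∀ m ∈ sieveModuli, 0 < m ∧ m ∈ fermatDegrees := by decide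
  have hmem := mod_prod_mem_sieve (fun _ _ _ ↦ Escapes.congr)
    (fun m hm ↦ (hdegrees m hm).1) fun m hm ↦ h m (hdegrees m hm).2
  have hprod : q < sieveModuli.prod := hlt.trans (by decide)
  rw [Nat.mod_eq_of_lt hprod] at hmem
  exact eq_of_mem_sieve_of_forall_escapes q hmem hlt h

lemma exists_hasNegOnePow_of_prime_le :
    ∀ q ≤ 73, q.Prime → 2 < q → ∃ m ∈ fermatDegrees, HasNegOnePow m q := by
  decide +kernel

lemma exists_hasNegOnePow_of_prime_gt {q : ℕ} (hq : q.Prime) (hgt : 73 < q)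
    (hlt : q < 67665781) : ∃ m ∈ fermatDegrees, HasNegOnePow m q := by
  by_contra! hnone
  have hdegrees : ∀ m ∈ fermatDegrees, m ≠ 0 ∧ m ≤ 73 := by decide
  have hescapes : ∀ m ∈ fermatDegrees, Escapes m q := fun m hm ↦
    ⟨Nat.coprime_of_lt_prime (hdegrees m hm).1 ((hdegrees m hm).2.trans_lt hgt) hq, hnone m hm⟩
  rcases eq_of_forall_escapes hlt hescapes with rfl | rfl
  · exact Nat.not_prime_one hq
  · norm_num at hq

end Horikawa

/-- The number `67665781` is prime; for every `m ∈ 𝓜` and every positive integer `ν` one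
has `67665781^ν ≢ −1 (mod m)`; and every prime `q` with `2 < q < 67665781` admits some
`m ∈ 𝓜` and positive `ν` with `q^ν ≡ −1 (mod m)`. -/
theorem stmt_15 :
    Nat.Prime 67665781 ∧
    (∀ m ∈ fermatDegrees, ∀ ν : ℕ, 0 < ν → ¬ (m ∣ 67665781 ^ ν + 1)) ∧
    (∀ q : ℕ, Nat.Prime q → 2 < q → q < 67665781 →
      ∃ m ∈ fermatDegrees, ∃ ν : ℕ, 0 < ν ∧ m ∣ q ^ ν + 1) := by
  have hnone : ∀ m ∈ fermatDegrees, ¬ Horikawa.HasNegOnePow m 67665781 := by decide +kernel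
  refine ⟨by norm_num, fun m hm ν hν hdvd ↦ hnone m hm ⟨ν, hν, hdvd⟩, fun q hq hgt hlt ↦ ?_⟩
  rcases le_or_gt q 73 with hsmall | hlarge
  · exact Horikawa.exists_hasNegOnePow_of_prime_le q hsmall hq hgt
  · exact Horikawa.exists_hasNegOnePow_of_prime_gt hq hlarge hlt
end
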